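/- arXiv:cs/0602075 — 4 statements merged into one kernel-verified Lean document; each statement's English description precedes it below -/
import Mathlib

section
/- Let n ≥ 2 and let M be a nonzero n×n matrix with entries in {0,1} (indexed by {0,…,n−1}) having no all-ones row and no all-ones column. Then M is an a-Monge matrix if and only if one of the following holds: (i) M = L_n^{pq} for some 0 ≤ p,q ≤ n−2; or (ii) M = R_n^{st} for some 1 ≤ s,t ≤ n−1; or (iii) M = L_n^{pq} + R_n^{st} for some 0 ≤ p,q ≤ n−2 and 1 ≤ s,t ≤ n−1 with p < s, or q < t, or both. -/
/-- An `n × n` matrix (indexed by `Fin n`) is a-Monge if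
`M i k + M j l ≥ M i l + M j k` whenever `i < j` and `k < l`. -/
def AMonge {n : ℕ} (M : Fin n → Fin n → ℤ) : Prop :=
  ∀ i j k l : Fin n, i < j → k < l → M i l + M j k ≤ M i k + M j l

/-- The 0-1 matrix `L_n^{pq}`: entry `(i,j)` is `1` iff `i ≤ p` and `j ≤ q`. -/
def Lmat {n : ℕ} (p q : Fin n) : Fin n → Fin n → ℤ :=
  fun i j => if i ≤ p ∧ j ≤ q then 1 else 0

/-- The 0-1 matrix `R_n^{st}`: entry `(i,j)` is `1` iff `i ≥ s` and `j ≥ t`. -/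
def Rmat {n : ℕ} (s t : Fin n) : Fin n → Fin n → ℤ :=
  fun i j => if s ≤ i ∧ t ≤ j then 1 else 0

/-!
Say that a one at `(i, j)` has a full arm in some direction if the row or column through it
consists of ones from `(i, j)` on in that direction. The Monge inequality, applied to the one and
to two zeros of its row and column, shows that left or down is full, and that right or up is full.
Left and right together would fill row `i`, up and down together column `j`, so either left and up
are full or right and down are. By the inequality again, a full left and a full up arm fill the
whole quadrant of positions `≤ (i, j)`, and the positions whose lower quadrant is filled form a
product of two lower sets. Reversing both orders gives a product of two upper sets for the other
ones. On a finite chain, nonempty proper lower and upper sets are the `Set.Iic p` and `Set.Ici s`.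
-/

open Set

section Monge

variable {α β R : Type*}

/-- The a-Monge property of a rectangular matrix whose rows and columns are indexed by arbitrary
ordered types. -/
def IsAMonge [LT α] [LT β] [Add R] [LE R] (M : α → β → R) : Prop :=
  ∀ ⦃i j : α⦄ ⦃k l : β⦄, i < j → k < l → M i l + M j k ≤ M i k + M j l

/-- The 0-1 matrix of the block with row set `I` and column set `J`, as a rank-one product. For
lower sets it generalizes `Lmat`, for upper sets `Rmat`. -/
noncomputable def blockIndicator [MulZeroOneClass R] (I : Set α) (J : Set β) : α → β → R :=
  fun i j => I.indicator 1 i * J.indicator 1 j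

/-- All entries of `M` at positions `≤ (i, j)` are `1`. For a-Monge matrices these `(i, j)` form
the lower block. -/
def OnesBelow [LE α] [LE β] [One R] (M : α → β → R) (i : α) (j : β) : Prop :=
  ∀ i' ≤ i, ∀ j' ≤ j, M i' j' = 1

/-- All entries of `M` at positions `≥ (i, j)` are `1`. This is definitionally `OnesBelow` for the
reversed orders. -/
def OnesAbove [LE α] [LE β] [One R] (M : α → β → R) (i : α) (j : β) : Prop :=
  ∀ i' ≥ i, ∀ j' ≥ j, M i' j' = 1

section Symmetries

variable [LT α] [LT β] [AddCommMagma R] [LE R] {M : α → β → R}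

theorem IsAMonge.transpose (hM : IsAMonge M) : IsAMonge fun j i => M i j :=
  fun k l i j hkl hij => by simpa only [add_comm] using hM hij hkl

theorem isAMonge_dual_iff :
    IsAMonge (fun (i : αᵒᵈ) (j : βᵒᵈ) => M (OrderDual.ofDual i) (OrderDual.ofDual j)) ↔
      IsAMonge M where
  mp h i j k l hij hkl := by
    simpa only [add_comm, OrderDual.ofDual_toDual] using
      h (OrderDual.toDual_lt_toDual.2 hij) (OrderDual.toDual_lt_toDual.2 hkl)
  mpr h i j k l hij hkl := by
    simpa only [add_comm] using
      h (OrderDual.ofDual_lt_ofDual.2 hij) (OrderDual.ofDual_lt_ofDual.2 hkl)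

end Symmetries

theorem IsAMonge.add [LT α] [LT β] [AddCommMonoid R] [PartialOrder R] [IsOrderedAddMonoid R]
    {M N : α → β → R} (hM : IsAMonge M) (hN : IsAMonge N) : IsAMonge (M + N) :=
  fun i j k l hij hkl => by
    simpa only [Pi.add_apply, add_add_add_comm] using add_le_add (hM hij hkl) (hN hij hkl)

theorem antitone_indicator_one_of_isLowerSet [Preorder α] [Zero R] [One R] [Preorder R]
    [ZeroLEOneClass R] {I : Set α} (hI : IsLowerSet I) : Antitone (I.indicator (1 : α → R)) :=
  fun a b hab => by
    by_cases hb : b ∈ I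
    · rw [indicator_of_mem hb, indicator_of_mem (hI hab hb), Pi.one_apply, Pi.one_apply]
    · rw [indicator_of_notMem hb]
      exact indicator_nonneg (fun _ _ => zero_le_one) a

section Blocks

variable [Semiring R] {I U : Set α} {J V : Set β} {i : α} {j : β}

theorem blockIndicator_of_mem (hi : i ∈ I) (hj : j ∈ J) : (blockIndicator I J i j : R) = 1 := by
  simp [blockIndicator, hi, hj]

theorem blockIndicator_of_notMem (h : ¬(i ∈ I ∧ j ∈ J)) : (blockIndicator I J i j : R) = 0 := by
  rcases not_and_or.1 h with hi | hj
  · simp [blockIndicator, hi]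
  · simp [blockIndicator, hj]

theorem blockIndicator_eq_zero (h : I = ∅ ∨ J = ∅) : (blockIndicator I J : α → β → R) = 0 := by
  ext i j
  rcases h with rfl | rfl <;> exact blockIndicator_of_notMem (by simp)

theorem blockIndicator_add_apply_eq_one (hdisj : Disjoint I U ∨ Disjoint J V)
    (h : i ∈ I ∧ j ∈ J ∨ i ∈ U ∧ j ∈ V) :
    (blockIndicator I J + blockIndicator U V : α → β → R) i j = 1 := by
  simp only [disjoint_left] at hdisj
  rcases h with h | h
  · rw [Pi.add_apply, Pi.add_apply, blockIndicator_of_mem h.1 h.2,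
      blockIndicator_of_notMem (by tauto), add_zero]
  · rw [Pi.add_apply, Pi.add_apply, blockIndicator_of_mem h.1 h.2,
      blockIndicator_of_notMem (by tauto), zero_add]

theorem eq_blockIndicator_add {M : α → β → R} (h01 : ∀ i j, M i j = 0 ∨ M i j = 1)
    (hdisj : Disjoint I U ∨ Disjoint J V)
    (hM : ∀ i j, M i j = 1 ↔ i ∈ I ∧ j ∈ J ∨ i ∈ U ∧ j ∈ V) :
    M = blockIndicator I J + blockIndicator U V := by
  ext i j
  by_cases h : i ∈ I ∧ j ∈ J ∨ i ∈ U ∧ j ∈ V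
  · rw [blockIndicator_add_apply_eq_one hdisj h, (hM i j).2 h]
  · rw [(h01 i j).resolve_right fun hij => h ((hM i j).1 hij), Pi.add_apply, Pi.add_apply,
      blockIndicator_of_notMem fun hL => h (.inl hL),
      blockIndicator_of_notMem fun hR => h (.inr hR), add_zero]

variable [PartialOrder R] [IsOrderedRing R] [IsOrderedCancelAddMonoid R] [ExistsAddOfLE R]
  [Preorder α] [Preorder β]

theorem isAMonge_mul_of_antitone {f : α → R} {g : β → R} (hf : Antitone f) (hg : Antitone g) :
    IsAMonge fun i j => f i * g j := fun i j k l hij hkl => by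
  simpa only [add_comm] using mul_add_mul_le_mul_add_mul (hf hij.le) (hg hkl.le)

theorem isAMonge_blockIndicator_of_isLowerSet (hI : IsLowerSet I) (hJ : IsLowerSet J) :
    IsAMonge (blockIndicator I J : α → β → R) :=
  isAMonge_mul_of_antitone (antitone_indicator_one_of_isLowerSet hI)
    (antitone_indicator_one_of_isLowerSet hJ)

theorem isAMonge_blockIndicator_of_isUpperSet (hU : IsUpperSet U) (hV : IsUpperSet V) :
    IsAMonge (blockIndicator U V : α → β → R) :=
  isAMonge_dual_iff.1 (isAMonge_blockIndicator_of_isLowerSet hU.toDual hV.toDual)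

end Blocks

theorem disjoint_or_disjoint_of_exists_ne_one [LinearOrder β] [One R]
    {M : α → β → R} {I U : Set α} {J V : Set β}
    (hJ : IsLowerSet J) (hV : IsUpperSet V) (hrow : ∀ i, ∃ j, M i j ≠ 1)
    (hM : ∀ i j, i ∈ I ∧ j ∈ J ∨ i ∈ U ∧ j ∈ V → M i j = 1) :
    Disjoint I U ∨ Disjoint J V := by
  by_contra! h
  obtain ⟨⟨i, hiI, hiU⟩, j, hjJ, hjV⟩ := h.imp not_disjoint_iff.1 not_disjoint_iff.1
  obtain ⟨b, hb⟩ := hrow i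
  exact hb (hM i b ((le_total b j).imp (fun h => ⟨hiI, hJ h hjJ⟩) fun h => ⟨hiU, hV h hjV⟩))

section ZeroOne

variable [Semiring R] [PartialOrder R] [IsStrictOrderedRing R]

section Preorder

variable [Preorder α] [Preorder β] {M : α → β → R} {i j : α} {k l : β}

theorem IsAMonge.eq_one_or_eq_one (hM : IsAMonge M) (h01 : ∀ i j, M i j = 0 ∨ M i j = 1)
    (hij : i < j) (hkl : k < l) (h : M i l = 1) : M i k = 1 ∨ M j l = 1 := by
  by_contra! hne
  have hMonge := hM hij hkl
  rw [h, (h01 i k).resolve_right hne.1, (h01 j l).resolve_right hne.2, zero_add] at hMonge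
  have hjk : 0 ≤ M j k := by rcases h01 j k with h | h <;> simp [h]
  exact (lt_add_of_lt_of_nonneg one_pos hjk).not_ge hMonge

theorem IsAMonge.eq_one_and_eq_one (hM : IsAMonge M) (h01 : ∀ i j, M i j = 0 ∨ M i j = 1)
    (hij : i < j) (hkl : k < l) (hil : M i l = 1) (hjk : M j k = 1) :
    M i k = 1 ∧ M j l = 1 := by
  have hle : ∀ i j, M i j ≤ 1 := fun i j => by rcases h01 i j with h | h <;> simp [h]
  have hMonge := hM hij hkl
  rw [hil, hjk] at hMonge
  exact (add_eq_add_iff_eq_and_eq (hle i k) (hle j l)).1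
    ((add_le_add (hle i k) (hle j l)).antisymm hMonge)

end Preorder

variable [LinearOrder α] [LinearOrder β] {M : α → β → R} {i a : α} {j b : β}

theorem IsAMonge.left_or_down_eq_one (hM : IsAMonge M) (h01 : ∀ i j, M i j = 0 ∨ M i j = 1)
    (h : M i j = 1) : (∀ b ≤ j, M i b = 1) ∨ ∀ a ≥ i, M a j = 1 := by
  by_contra! ⟨⟨b, hb, hib⟩, a, ha, haj⟩
  have hbj : b < j := hb.lt_of_ne (by rintro rfl; exact hib h)
  have hia : i < a := ha.lt_of_ne (by rintro rfl; exact haj h)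
  exact (hM.eq_one_or_eq_one h01 hia hbj h).elim hib haj

theorem IsAMonge.onesBelow_of_left_of_up (hM : IsAMonge M)
    (h01 : ∀ i j, M i j = 0 ∨ M i j = 1) (hleft : ∀ b ≤ j, M i b = 1)
    (hup : ∀ a ≤ i, M a j = 1) : OnesBelow M i j := fun a ha b hb => by
  rcases ha.eq_or_lt with rfl | hai
  · exact hleft b hb
  rcases hb.eq_or_lt with rfl | hbj
  · exact hup a ha
  exact (hM.eq_one_and_eq_one h01 hai hbj (hup a ha) (hleft b hb)).1

theorem IsAMonge.onesAbove_of_right_of_down (hM : IsAMonge M)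
    (h01 : ∀ i j, M i j = 0 ∨ M i j = 1) (hright : ∀ b ≥ j, M i b = 1)
    (hdown : ∀ a ≥ i, M a j = 1) : OnesAbove M i j :=
  (isAMonge_dual_iff.2 hM).onesBelow_of_left_of_up (fun _ _ => h01 _ _) hright hdown

theorem IsAMonge.onesBelow_or_onesAbove (hM : IsAMonge M)
    (h01 : ∀ i j, M i j = 0 ∨ M i j = 1) (hrow : ∀ i, ∃ j, M i j ≠ 1)
    (hcol : ∀ j, ∃ i, M i j ≠ 1) (h : M i j = 1) : OnesBelow M i j ∨ OnesAbove M i j := by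
  have hleft_down : (∀ b ≤ j, M i b = 1) ∨ ∀ a ≥ i, M a j = 1 := hM.left_or_down_eq_one h01 h
  have hup_right : (∀ a ≤ i, M a j = 1) ∨ ∀ b ≥ j, M i b = 1 :=
    hM.transpose.left_or_down_eq_one (fun j i => h01 i j) h
  have hleft_right : ¬((∀ b ≤ j, M i b = 1) ∧ ∀ b ≥ j, M i b = 1) := fun ⟨hleft, hright⟩ =>
    let ⟨b, hb⟩ := hrow i
    hb ((le_total b j).elim (hleft b) (hright b))
  have hup_down : ¬((∀ a ≤ i, M a j = 1) ∧ ∀ a ≥ i, M a j = 1) := fun ⟨hup, hdown⟩ =>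
    let ⟨a, ha⟩ := hcol j
    ha ((le_total a i).elim (hup a) (hdown a))
  have hbelow := hM.onesBelow_of_left_of_up h01 (i := i) (j := j)
  have habove := hM.onesAbove_of_right_of_down h01 (i := i) (j := j)
  tauto

theorem IsAMonge.onesBelow_of_onesBelow (hM : IsAMonge M)
    (h01 : ∀ i j, M i j = 0 ∨ M i j = 1) (hib : OnesBelow M i b) (haj : OnesBelow M a j) :
    OnesBelow M i j := fun i' hi' j' hj' => by
  rcases le_or_gt i' a with hi'a | hai'
  · exact haj i' hi'a j' hj'
  rcases le_or_gt j' b with hj'b | hbj'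
  · exact hib i' hi' j' hj'b
  exact (hM.eq_one_and_eq_one h01 hai' hbj' (haj a le_rfl j' hj') (hib i' hi' b le_rfl)).2

theorem IsAMonge.exists_isLowerSet_onesBelow_iff (hM : IsAMonge M)
    (h01 : ∀ i j, M i j = 0 ∨ M i j = 1) :
    ∃ (I : Set α) (J : Set β), IsLowerSet I ∧ IsLowerSet J ∧
      ∀ i j, OnesBelow M i j ↔ i ∈ I ∧ j ∈ J :=
  ⟨{i | ∃ j, OnesBelow M i j}, {j | ∃ i, OnesBelow M i j},
    fun _ _ hi ⟨j, h⟩ => ⟨j, fun _ hi' => h _ (hi'.trans hi)⟩,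
    fun _ _ hj ⟨i, h⟩ => ⟨i, fun _ hi' _ hj' => h _ hi' _ (hj'.trans hj)⟩,
    fun i j => ⟨fun h => ⟨⟨j, h⟩, i, h⟩,
      fun ⟨⟨_, hib⟩, _, haj⟩ => hM.onesBelow_of_onesBelow h01 hib haj⟩⟩

theorem IsAMonge.exists_isUpperSet_onesAbove_iff (hM : IsAMonge M)
    (h01 : ∀ i j, M i j = 0 ∨ M i j = 1) :
    ∃ (U : Set α) (V : Set β), IsUpperSet U ∧ IsUpperSet V ∧
      ∀ i j, OnesAbove M i j ↔ i ∈ U ∧ j ∈ V :=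
  let ⟨U, V, hU, hV, h⟩ :=
    (isAMonge_dual_iff.2 hM).exists_isLowerSet_onesBelow_iff fun _ _ => h01 _ _
  ⟨OrderDual.toDual ⁻¹' U, OrderDual.toDual ⁻¹' V, hU.toDual, hV.toDual, h⟩

theorem IsAMonge.exists_eq_blockIndicator_add (hM : IsAMonge M)
    (h01 : ∀ i j, M i j = 0 ∨ M i j = 1) (hrow : ∀ i, ∃ j, M i j ≠ 1)
    (hcol : ∀ j, ∃ i, M i j ≠ 1) :
    ∃ (I : Set α) (J : Set β) (U : Set α) (V : Set β),
      IsLowerSet I ∧ IsLowerSet J ∧ IsUpperSet U ∧ IsUpperSet V ∧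
        (Disjoint I U ∨ Disjoint J V) ∧ M = blockIndicator I J + blockIndicator U V := by
  obtain ⟨I, J, hI, hJ, hIJ⟩ := hM.exists_isLowerSet_onesBelow_iff h01
  obtain ⟨U, V, hU, hV, hUV⟩ := hM.exists_isUpperSet_onesAbove_iff h01
  have hsupp : ∀ i j, M i j = 1 ↔ i ∈ I ∧ j ∈ J ∨ i ∈ U ∧ j ∈ V := fun i j => by
    rw [← hIJ, ← hUV]
    exact ⟨hM.onesBelow_or_onesAbove h01 hrow hcol,
      Or.rec (fun h => h i le_rfl j le_rfl) fun h => h i le_rfl j le_rfl⟩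
  have hdisj := disjoint_or_disjoint_of_exists_ne_one hJ hV hrow fun i j => (hsupp i j).2
  exact ⟨I, J, U, V, hI, hJ, hU, hV, hdisj, eq_blockIndicator_add h01 hdisj hsupp⟩

end ZeroOne

section FiniteChains

theorem exists_eq_Ici_of_isUpperSet [LinearOrder α] [WellFoundedLT α] {U : Set α}
    (hU : IsUpperSet U) (hne : U.Nonempty) {a : α} (ha : a ∉ U) : ∃ s, ¬IsMin s ∧ U = Ici s := by
  obtain ⟨s, rfl⟩ := hU.eq_empty_or_Ici.resolve_left hne.ne_empty
  exact ⟨s, fun hs => ha (hs.isBot a), rfl⟩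

variable [LinearOrder α] [LinearOrder β]

theorem exists_eq_Ici_of_isUpperSet_prod [WellFoundedLT α] [WellFoundedLT β] {U : Set α}
    {V : Set β} (hU : IsUpperSet U) (hV : IsUpperSet V) (hrow : ∀ i ∈ U, ∃ j, j ∉ V)
    (hcol : ∀ j ∈ V, ∃ i, i ∉ U) :
    (U = ∅ ∨ V = ∅) ∨ ∃ s t, ¬IsMin s ∧ ¬IsMin t ∧ U = Ici s ∧ V = Ici t := by
  rcases U.eq_empty_or_nonempty with hU₀ | ⟨i, hi⟩
  · exact .inl (.inl hU₀)
  rcases V.eq_empty_or_nonempty with hV₀ | ⟨j, hj⟩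
  · exact .inl (.inr hV₀)
  obtain ⟨b, hb⟩ := hrow i hi
  obtain ⟨a, ha⟩ := hcol j hj
  obtain ⟨s, hs, hUs⟩ := exists_eq_Ici_of_isUpperSet hU ⟨i, hi⟩ ha
  obtain ⟨t, ht, hVt⟩ := exists_eq_Ici_of_isUpperSet hV ⟨j, hj⟩ hb
  exact .inr ⟨s, t, hs, ht, hUs, hVt⟩

theorem exists_eq_Iic_of_isLowerSet_prod [WellFoundedGT α] [WellFoundedGT β] {I : Set α}
    {J : Set β} (hI : IsLowerSet I) (hJ : IsLowerSet J) (hrow : ∀ i ∈ I, ∃ j, j ∉ J)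
    (hcol : ∀ j ∈ J, ∃ i, i ∉ I) :
    (I = ∅ ∨ J = ∅) ∨ ∃ p q, ¬IsMax p ∧ ¬IsMax q ∧ I = Iic p ∧ J = Iic q :=
  exists_eq_Ici_of_isUpperSet_prod (α := αᵒᵈ) (β := βᵒᵈ) hI.toDual hJ.toDual hrow hcol

theorem zero_one_aMonge_structure_general [Finite α] [Finite β] [Semiring R] [PartialOrder R]
    [IsStrictOrderedRing R] [ExistsAddOfLE R] (M : α → β → R)
    (h01 : ∀ i j, M i j = 0 ∨ M i j = 1)
    (hnz : ∃ i j, M i j ≠ 0)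
    (hrow : ∀ i, ∃ j, M i j ≠ 1)
    (hcol : ∀ j, ∃ i, M i j ≠ 1) :
    IsAMonge M ↔
      ((∃ p q, ¬IsMax p ∧ ¬IsMax q ∧ M = blockIndicator (Iic p) (Iic q)) ∨
       (∃ s t, ¬IsMin s ∧ ¬IsMin t ∧ M = blockIndicator (Ici s) (Ici t)) ∨
       (∃ p q s t, ¬IsMax p ∧ ¬IsMax q ∧ ¬IsMin s ∧ ¬IsMin t ∧ (p < s ∨ q < t) ∧
          M = blockIndicator (Iic p) (Iic q) + blockIndicator (Ici s) (Ici t))) := by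
  constructor
  · intro hM
    obtain ⟨I, J, U, V, hI, hJ, hU, hV, hdisj, hMeq⟩ :=
      hM.exists_eq_blockIndicator_add h01 hrow hcol
    have hone : ∀ i j, i ∈ I ∧ j ∈ J ∨ i ∈ U ∧ j ∈ V → M i j = 1 := fun i j h =>
      hMeq ▸ blockIndicator_add_apply_eq_one hdisj h
    have hlower := exists_eq_Iic_of_isLowerSet_prod hI hJ
      (fun i hi => (hrow i).imp fun j hij hj => hij (hone i j (.inl ⟨hi, hj⟩)))
      (fun j hj => (hcol j).imp fun i hij hi => hij (hone i j (.inl ⟨hi, hj⟩)))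
    have hupper := exists_eq_Ici_of_isUpperSet_prod hU hV
      (fun i hi => (hrow i).imp fun j hij hj => hij (hone i j (.inr ⟨hi, hj⟩)))
      (fun j hj => (hcol j).imp fun i hij hi => hij (hone i j (.inr ⟨hi, hj⟩)))
    rcases hlower with hIJ | ⟨p, q, hp, hq, rfl, rfl⟩ <;>
      rcases hupper with hUV | ⟨s, t, hs, ht, rfl, rfl⟩
    · rw [blockIndicator_eq_zero hIJ, blockIndicator_eq_zero hUV, add_zero] at hMeq
      obtain ⟨i, j, hij⟩ := hnz
      exact absurd (congrFun₂ hMeq i j) hij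
    · rw [blockIndicator_eq_zero hIJ, zero_add] at hMeq
      exact .inr (.inl ⟨s, t, hs, ht, hMeq⟩)
    · rw [blockIndicator_eq_zero hUV, add_zero] at hMeq
      exact .inl ⟨p, q, hp, hq, hMeq⟩
    · simp only [Iic_disjoint_Ici, not_le] at hdisj
      exact .inr (.inr ⟨p, q, s, t, hp, hq, hs, ht, hdisj, hMeq⟩)
  · have hL : ∀ p q, IsAMonge (blockIndicator (Iic p) (Iic q) : α → β → R) := fun p q =>
      isAMonge_blockIndicator_of_isLowerSet (isLowerSet_Iic p) (isLowerSet_Iic q)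
    have hR : ∀ s t, IsAMonge (blockIndicator (Ici s) (Ici t) : α → β → R) := fun s t =>
      isAMonge_blockIndicator_of_isUpperSet (isUpperSet_Ici s) (isUpperSet_Ici t)
    rintro (⟨p, q, -, -, rfl⟩ | ⟨s, t, -, -, rfl⟩ | ⟨p, q, s, t, -, -, -, -, -, rfl⟩)
    · exact hL p q
    · exact hR s t
    · exact (hL p q).add (hR s t)

end FiniteChains

end Monge

section SquareMatrices

variable {n : ℕ}

theorem aMonge_iff_isAMonge {M : Fin n → Fin n → ℤ} : AMonge M ↔ IsAMonge M :=
  Iff.rfl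

theorem Lmat_eq_blockIndicator (p q : Fin n) : Lmat p q = blockIndicator (Iic p) (Iic q) := by
  ext i j
  simp [Lmat, blockIndicator, indicator_apply, ← ite_and, and_comm]

theorem Rmat_eq_blockIndicator (s t : Fin n) : Rmat s t = blockIndicator (Ici s) (Ici t) := by
  ext i j
  simp [Rmat, blockIndicator, indicator_apply, ← ite_and, and_comm]

theorem val_le_sub_two_iff_not_isMax (hn : 2 ≤ n) (p : Fin n) : (p : ℕ) ≤ n - 2 ↔ ¬IsMax p := by
  rw [not_isMax_iff]
  exact ⟨fun hp => ⟨⟨n - 1, by omega⟩, by rw [Fin.lt_def]; dsimp only; omega⟩,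
    fun ⟨b, hb⟩ => by omega⟩

theorem one_le_val_iff_not_isMin (s : Fin n) : 1 ≤ (s : ℕ) ↔ ¬IsMin s := by
  rw [not_isMin_iff]
  exact ⟨fun hs => ⟨⟨0, s.pos⟩, hs⟩, fun ⟨b, hb⟩ => by omega⟩

end SquareMatrices

/-- A nonzero 0-1 square matrix without all-ones rows or columns is
a-Monge iff it is `L_n^{pq}`, or `R_n^{st}`, or `L_n^{pq} + R_n^{st}` with `p < s` or
`q < t` (or both), for parameters in the stated ranges. -/
theorem zero_one_aMonge_structure
    {n : ℕ} (hn : 2 ≤ n) (M : Fin n → Fin n → ℤ)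
    (h01 : ∀ i j, M i j = 0 ∨ M i j = 1)
    (hnz : ∃ i j, M i j ≠ 0)
    (hrow : ∀ i, ∃ j, M i j ≠ 1)
    (hcol : ∀ j, ∃ i, M i j ≠ 1) :
    AMonge M ↔
      ((∃ p q : Fin n, (p : ℕ) ≤ n - 2 ∧ (q : ℕ) ≤ n - 2 ∧ M = Lmat p q) ∨
       (∃ s t : Fin n, 1 ≤ (s : ℕ) ∧ 1 ≤ (t : ℕ) ∧ M = Rmat s t) ∨
       (∃ p q s t : Fin n, (p : ℕ) ≤ n - 2 ∧ (q : ℕ) ≤ n - 2 ∧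
          1 ≤ (s : ℕ) ∧ 1 ≤ (t : ℕ) ∧ (p < s ∨ q < t) ∧
          M = fun i j => Lmat p q i j + Rmat s t i j)) := by
  simpa only [aMonge_iff_isAMonge, val_le_sub_two_iff_not_isMax hn, one_le_val_iff_not_isMin,
    Lmat_eq_blockIndicator, Rmat_eq_blockIndicator, Pi.add_def] using
    zero_one_aMonge_structure_general M h01 hnz hrow hcol
end

section
/- Let D be a finite linearly ordered set, let n ≥ 2, and let f : D^n → ℤ be a function with non-negative values. Then f is supermodular on this chain if and only if every binary function obtained from f by substituting constants from D for any chosen n−2 of its variables is supermodular on this chain. -/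
/-!
Raising coordinate `i` of `c` from `x` to `y` changes `f` by an increment that depends on the other
coordinates of `c`. Supermodularity of the binary restrictions makes this increment monotone in each
of them, hence in all of them jointly. Now climb from `a ⊓ b` to `a` and, in parallel, from `b` to
`a ⊔ b`, one coordinate at a time. The second path stays above the first, so raising coordinate `i`
from `b i` to `a i ⊔ b i` on it gains at least as much as raising it from `a i ⊓ b i` to `a i` on
the first. These gains add up to `f a - f (a ⊓ b) ≤ f (a ⊔ b) - f b`. On a chain the two raises of a
coordinate are either the same or both trivial; on a lattice they are compared by supermodularity in
that coordinate alone, which the binary restrictions contain.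
-/

/-- An `n`-ary function on a chain `D` is supermodular if
`f a + f b ≤ f (a ⊓ b) + f (a ⊔ b)` with componentwise min and max. -/
def Supermod {D : Type*} [LinearOrder D] {n : ℕ} (f : (Fin n → D) → ℤ) : Prop :=
  ∀ a b : Fin n → D,
    f a + f b ≤ f (fun i => min (a i) (b i)) + f (fun i => max (a i) (b i))

/-- A binary function on a chain `D` is supermodular if
`g x₁ y₁ + g x₂ y₂ ≤ g (min x₁ x₂) (min y₁ y₂) + g (max x₁ x₂) (max y₁ y₂)`. -/
def Supermod2 {D : Type*} [LinearOrder D] (g : D → D → ℤ) : Prop :=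
  ∀ x1 y1 x2 y2 : D,
    g x1 y1 + g x2 y2 ≤ g (min x1 x2) (min y1 y2) + g (max x1 x2) (max y1 y2)

open Function

/-- Supermodularity of a function on an arbitrary lattice. `Supermod` is the case of a finite power
of a chain, and `Supermod2`, after uncurrying, that of its square. -/
def IsSupermodular {L M : Type*} [Lattice L] [Add M] [LE M] (f : L → M) : Prop :=
  ∀ a b : L, f a + f b ≤ f (a ⊓ b) + f (a ⊔ b)

/-- The binary restriction of `f` to the coordinates `i` and `j`, the remaining coordinates being
those of `c`. It is meant for `i ≠ j`; if `i = j`, then `p.2` is ignored. -/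
def binaryRestriction {ι M : Type*} {α : ι → Type*} [DecidableEq ι] (f : (∀ i, α i) → M)
    (c : ∀ i, α i) (i j : ι) (p : α i × α j) : M :=
  f (update (update c j p.2) i p.1)

section Pi

variable {ι : Type*} {α : ι → Type*} [DecidableEq ι]

theorem update_inf_inf [∀ i, SemilatticeInf (α i)] (c d : ∀ i, α i) (i : ι) (x y : α i) :
    update (c ⊓ d) i (x ⊓ y) = update c i x ⊓ update d i y :=
  funext fun k => (apply_update₂ (fun _ => (· ⊓ ·)) c d i x y k).symm

theorem update_sup_sup [∀ i, SemilatticeSup (α i)] (c d : ∀ i, α i) (i : ι) (x y : α i) :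
    update (c ⊔ d) i (x ⊔ y) = update c i x ⊔ update d i y :=
  funext fun k => (apply_update₂ (fun _ => (· ⊔ ·)) c d i x y k).symm

theorem monotone_of_monotone_update [Finite ι] [∀ i, Preorder (α i)] {β : Type*} [Preorder β]
    {F : (∀ i, α i) → β} (hF : ∀ c i, Monotone fun x => F (update c i x)) : Monotone F := by
  intro a b hab
  have := Fintype.ofFinite ι
  suffices hs : ∀ s : Finset ι, F a ≤ F (s.piecewise b a) by
    simpa only [Finset.piecewise_univ] using hs Finset.univ
  intro s
  induction s using Finset.induction_on with
  | empty => rw [Finset.piecewise_empty]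
  | insert i s hi ih =>
    calc F a ≤ F (s.piecewise b a) := ih
      _ = F (update (s.piecewise b a) i (a i)) := by
        rw [update_eq_self_iff.mpr (Finset.piecewise_eq_of_notMem _ _ _ hi).symm]
      _ ≤ F (update (s.piecewise b a) i (b i)) := hF _ i (hab i)
      _ = F ((insert i s).piecewise b a) := by rw [Finset.piecewise_insert]

end Pi

theorem isSupermodular_iff_sub_le_sub {L M : Type*} [Lattice L] [AddCommGroup M] [Preorder M]
    [IsOrderedAddMonoid M] {f : L → M} :
    IsSupermodular f ↔ ∀ a b, f a - f (a ⊓ b) ≤ f (a ⊔ b) - f b := by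
  simp only [IsSupermodular, sub_le_sub_iff, add_comm (f (_ ⊓ _))]

namespace IsSupermodular

theorem comp {K L M : Type*} [Lattice K] [Lattice L] [Add M] [LE M] {f : L → M}
    (hf : IsSupermodular f) {φ : K → L} (hinf : ∀ x y, φ (x ⊓ y) = φ x ⊓ φ y)
    (hsup : ∀ x y, φ (x ⊔ y) = φ x ⊔ φ y) : IsSupermodular fun x => f (φ x) := fun x y => by
  simpa only [hinf, hsup] using hf (φ x) (φ y)

theorem sub_le_sub_of_prod {K L M : Type*} [Lattice K] [Lattice L] [AddCommGroup M] [Preorder M]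
    [IsOrderedAddMonoid M] {g : K × L → M} (hg : IsSupermodular g) {x x' : K} {y y' : L}
    (hx : x ≤ x') (hy : y ≤ y') : g (x', y) - g (x, y) ≤ g (x', y') - g (x, y') := by
  simpa only [Prod.mk_inf_mk, Prod.mk_sup_mk, inf_eq_right.mpr hx, inf_eq_left.mpr hy,
    sup_eq_left.mpr hx, sup_eq_right.mpr hy] using
    isSupermodular_iff_sub_le_sub.mp hg (x', y) (x, y')

section Pi

variable {ι M : Type*} {α : ι → Type*} [DecidableEq ι] [∀ i, Lattice (α i)]

protected theorem binaryRestriction [Add M] [LE M] {f : (∀ i, α i) → M} (hf : IsSupermodular f)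
    (c : ∀ i, α i) (i j : ι) : IsSupermodular (binaryRestriction f c i j) :=
  hf.comp
    (fun p q => by rw [← update_inf_inf, ← update_inf_inf, inf_idem, Prod.fst_inf, Prod.snd_inf])
    (fun p q => by rw [← update_sup_sup, ← update_sup_sup, sup_idem, Prod.fst_sup, Prod.snd_sup])

theorem update_of_binaryRestriction [Add M] [LE M] {f : (∀ i, α i) → M} {c : ∀ i, α i} {i j : ι}
    (hf : IsSupermodular (binaryRestriction f c i j)) :
    IsSupermodular fun x => f (update c i x) := by
  have hfix : IsSupermodular fun x => binaryRestriction f c i j (x, c j) :=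
    hf.comp (fun x y => by rw [Prod.mk_inf_mk, inf_idem])
      (fun x y => by rw [Prod.mk_sup_mk, sup_idem])
  simpa only [binaryRestriction, update_eq_self] using hfix

variable [Finite ι] [AddCommGroup M] [Preorder M] [IsOrderedAddMonoid M] {f : (∀ i, α i) → M}

theorem monotone_update_sub_update
    (hf : ∀ i j, i ≠ j → ∀ c, IsSupermodular (binaryRestriction f c i j))
    (i : ι) {x y : α i} (hxy : x ≤ y) :
    Monotone fun c => f (update c i y) - f (update c i x) := by
  refine monotone_of_monotone_update fun c j z z' hz => ?_
  obtain rfl | hij := eq_or_ne i j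
  · simp only [update_idem, le_refl]
  · exact (hf i j hij c).sub_le_sub_of_prod hxy hz

theorem of_monotone_update_sub_update (hunary : ∀ i c, IsSupermodular fun x => f (update c i x))
    (hmono : ∀ i (x y : α i), x ≤ y → Monotone fun c => f (update c i y) - f (update c i x)) :
    IsSupermodular f := by
  refine isSupermodular_iff_sub_le_sub.mpr fun a b => ?_
  have := Fintype.ofFinite ι
  suffices hs : ∀ s : Finset ι,
      f (s.piecewise a (a ⊓ b)) - f (a ⊓ b) ≤ f (s.piecewise (a ⊔ b) b) - f b by
    simpa only [Finset.piecewise_univ] using hs Finset.univ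
  intro s
  induction s using Finset.induction_on with
  | empty => simp only [Finset.piecewise_empty, sub_self, le_refl]
  | insert i s hi ih =>
    rw [Finset.piecewise_insert, Finset.piecewise_insert]
    set p := s.piecewise a (a ⊓ b)
    set q := s.piecewise (a ⊔ b) b
    have hpq : p ≤ q := Finset.piecewise_le_piecewise s le_sup_left inf_le_right
    have hp : update p i (a i ⊓ b i) = p :=
      update_eq_self_iff.mpr (s.piecewise_eq_of_notMem a (a ⊓ b) hi).symm
    have hq : update q i (b i) = q :=
      update_eq_self_iff.mpr (s.piecewise_eq_of_notMem (a ⊔ b) b hi).symm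
    have hincr : f (update p i (a i)) - f p ≤ f (update q i (a i ⊔ b i)) - f q :=
      calc f (update p i (a i)) - f p
          = f (update p i (a i)) - f (update p i (a i ⊓ b i)) := by rw [hp]
        _ ≤ f (update p i (a i ⊔ b i)) - f (update p i (b i)) :=
          isSupermodular_iff_sub_le_sub.mp (hunary i p) (a i) (b i)
        _ ≤ f (update q i (a i ⊔ b i)) - f (update q i (b i)) := hmono i _ _ le_sup_right hpq
        _ = f (update q i (a i ⊔ b i)) - f q := by rw [hq]
    simpa only [Pi.sup_apply, sub_add_sub_cancel] using add_le_add hincr ih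

end Pi

end IsSupermodular

theorem supermodular_iff_binary_restrictions_general {ι M : Type*} {α : ι → Type*} [DecidableEq ι]
    [Finite ι] [Nontrivial ι] [∀ i, Lattice (α i)] [AddCommGroup M] [Preorder M]
    [IsOrderedAddMonoid M] {f : (∀ i, α i) → M} :
    IsSupermodular f ↔ ∀ i j, i ≠ j → ∀ c, IsSupermodular (binaryRestriction f c i j) := by
  refine ⟨fun hf i j _ c => hf.binaryRestriction c i j, fun hf => ?_⟩
  refine .of_monotone_update_sub_update (fun i c => ?_) fun i _ _ =>
    IsSupermodular.monotone_update_sub_update hf i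
  obtain ⟨j, hji⟩ := exists_ne i
  exact (hf i j hji.symm c).update_of_binaryRestriction

theorem supermod_iff_isSupermodular {D : Type*} [LinearOrder D] {n : ℕ} {f : (Fin n → D) → ℤ} :
    Supermod f ↔ IsSupermodular f :=
  Iff.rfl

theorem supermod2_ite_iff_isSupermodular_binaryRestriction {ι D : Type*} [DecidableEq ι]
    [LinearOrder D] {f : (ι → D) → ℤ} {c : ι → D} {i j : ι} :
    Supermod2 (fun x y => f (fun k => if k = i then x else if k = j then y else c k)) ↔
      IsSupermodular (binaryRestriction f c i j) := by
  have hupdate : ∀ x y : D, (fun k => if k = i then x else if k = j then y else c k) =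
      update (update c j y) i x := fun x y => by
    ext k
    simp only [update_apply]
  simp only [Supermod2, hupdate, IsSupermodular, binaryRestriction, Prod.forall, Prod.mk_inf_mk,
    Prod.mk_sup_mk]

/-- A non-negative `n`-ary function (`n ≥ 2`) on a finite chain is
supermodular iff every binary function obtained from it by substituting constants
for any chosen `n − 2` of its variables is supermodular on this chain. -/
theorem supermodular_iff_binary_restrictions
    {D : Type*} [Fintype D] [LinearOrder D] {n : ℕ} (hn : 2 ≤ n)
    (f : (Fin n → D) → ℤ) (hpos : ∀ t, 0 ≤ f t) :
    Supermod f ↔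
      ∀ (i j : Fin n), i ≠ j → ∀ c : Fin n → D,
        Supermod2 (fun x y =>
          f (fun k => if k = i then x else if k = j then y else c k)) := by
  have : Nontrivial (Fin n) := Fin.nontrivial_iff_two_le.mpr hn
  simpa only [supermod_iff_isSupermodular, supermod2_ite_iff_isSupermodular_binaryRestriction] using
    supermodular_iff_binary_restrictions_general
end

section
/- Let D be a finite set, let h : D² → {0,1} be a binary predicate, and suppose there is a ∈ D with h(x,a) = 1 for all x ∈ D. Define h' : D² → {0,1} by h'(x,y) = 0 if y = a and h'(x,y) = h(x,y) if y ≠ a. Then for every linear order on D, h is supermodular on that chain if and only if h' is supermodular on that chain. -/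
/-- A binary function on `D` is supermodular with respect to a given linear order
`r` on `D` if `g x₁ y₁ + g x₂ y₂ ≤ g (min x₁ x₂) (min y₁ y₂) + g (max x₁ x₂) (max y₁ y₂)`,
where min and max are taken in the order `r`. -/
def SupermodChain2 {D : Type*} (r : LinearOrder D) (g : D → D → ℤ) : Prop :=
  ∀ x1 y1 x2 y2 : D,
    g x1 y1 + g x2 y2 ≤
      g (r.min x1 x2) (r.min y1 y2) + g (r.max x1 x2) (r.max y1 y2)

theorem supermodChain2_add_snd_iff {D : Type*} (r : LinearOrder D) (g : D → D → ℤ) (φ : D → ℤ) :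
    SupermodChain2 r (fun x y => g x y + φ y) ↔ SupermodChain2 r g := by
  have φ_min_add_max (y₁ y₂ : D) : φ (r.min y₁ y₂) + φ (r.max y₁ y₂) = φ y₁ + φ y₂ :=
    fn_min_add_fn_max φ y₁ y₂
  refine forall₄_congr fun x₁ y₁ x₂ y₂ => ?_
  dsimp only
  rw [add_add_add_comm, add_add_add_comm (g (r.min x₁ x₂) _), φ_min_add_max, add_le_add_iff_right]

theorem supermodular_zeroed_column_general {D : Type*} [DecidableEq D]
    (h : D → D → ℤ) (a : D) (c d : ℤ) (hcol : ∀ x, h x a = c) (r : LinearOrder D) :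
    SupermodChain2 r h ↔ SupermodChain2 r (fun x y => if y = a then d else h x y) := by
  have replace_column_eq_add : (fun x y => if y = a then d else h x y) =
      fun x y => h x y + (Pi.single a (d - c) : D → ℤ) y := by
    ext x y
    obtain rfl | hy := eq_or_ne y a
    · simp [hcol]
    · simp [hy]
  rw [replace_column_eq_add, supermodChain2_add_snd_iff]

/-- Let `h` be a binary predicate on a finite set `D` with an
all-ones column `a` (i.e. `h x a = 1` for all `x`), and let `h'` be obtained from
`h` by zeroing out that column.  Then for every linear order (chain) on `D`, `h` is
supermodular on the chain iff `h'` is. -/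
theorem supermodular_zeroed_column
    {D : Type*} [Fintype D] [DecidableEq D]
    (h : D → D → ℤ) (h01 : ∀ x y, h x y = 0 ∨ h x y = 1)
    (a : D) (hall : ∀ x, h x a = 1) :
    ∀ r : LinearOrder D,
      SupermodChain2 r h ↔
        SupermodChain2 r (fun x y => if y = a then 0 else h x y) :=
  supermodular_zeroed_column_general h a 1 0 hall
end

section
/- Let D be a finite set and let F be a finite set of binary predicates on D such that F is not supermodular on any chain on D. Then there exist a subset F' ⊆ F with |F'| ≤ 3 and a subset D' ⊆ D with |D'| ≤ 4 such that the set of restrictions {f restricted to D'×D' : f ∈ F'} is not supermodular on any chain on D'. -/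
/-!
A nonzero mixed second difference of `f` ties the direction of a pair of rows to the direction of a
pair of columns, so the orders on which `f` is supermodular are nearly forced. Let `(e, g)` maximise
the second difference over a pair of equal rows and columns. Rankings of four elements containing
`e` and `g` can be chosen with `e` first and `g` last, and the second differences based at `e` give
every element a row weight and a column weight in `{0, 1, 2}`. Four-element conditions show that
these weights determine all second differences, and the sum of the two weights is a height function
whose order, up to reversal, is the only one possible for `f`.

The height functions of any two predicates can be oriented so that they have a common lowest and a
common highest element; ranking these elements together then shows that the two never order a pair
oppositely. Orienting everything relative to one nonconstant height is consistent because the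
extremes shared with two other heights form a single four-element set: this is where three
predicates are needed. The heights then admit a common linear extension.
-/

/-- The mixed second difference of `f` over the row pair `(p, q)` and the column pair `(s, t)`;
supermodularity says that it is nonnegative on pairs increasing in the chain. -/
def crossDiff {D : Type*} (f : D → D → ℤ) (p q s t : D) : ℤ :=
  f p s + f q t - f p t - f q s

/-- The function `f` normalised to vanish on row `e` and on column `e`, which leaves its second
differences unchanged. -/
def corner {D : Type*} (f : D → D → ℤ) (e x y : D) : ℤ :=
  crossDiff f e x e y

/-- Supermodularity of `f` on `X` along the weak order in which `pos` ranks the elements. Elements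
may share a rank, and `pos` is arbitrary outside `X`. -/
def SupermodRank {D : Type*} (pos : D → ℤ) (f : D → D → ℤ) (X : Set D) : Prop :=
  ∀ p ∈ X, ∀ q ∈ X, ∀ s ∈ X, ∀ t ∈ X,
    pos p ≤ pos q → pos s ≤ pos t → 0 ≤ crossDiff f p q s t

/-- Any four elements admit one ranking on which all members of `S` are supermodular. -/
def LocallySupermod {D : Type*} (S : Set (D → D → ℤ)) : Prop :=
  ∀ a b c d : D, ∃ pos : D → ℤ, ∀ f ∈ S, SupermodRank pos f {a, b, c, d}

/-- The element `a` is a lowest and `b` a highest element for the height function `τ`. -/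
def Spans {D : Type*} (τ : D → ℤ) (a b : D) : Prop :=
  ∀ z, τ a ≤ τ z ∧ τ z ≤ τ b

theorem Spans.neg {D : Type*} {τ : D → ℤ} {a b : D} (h : Spans τ a b) : Spans (-τ) b a :=
  fun z => ⟨neg_le_neg (h z).2, neg_le_neg (h z).1⟩

section CrossDiff

variable {D : Type*} (f : D → D → ℤ) (e p q r s t u x y : D)

theorem crossDiff_rev_left : crossDiff f q p s t = -crossDiff f p q s t := by
  unfold crossDiff; ring

theorem crossDiff_rev_right : crossDiff f p q t s = -crossDiff f p q s t := by
  unfold crossDiff; ring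

theorem crossDiff_add_left :
    crossDiff f p q s t + crossDiff f q r s t = crossDiff f p r s t := by
  unfold crossDiff; ring

theorem crossDiff_add_right :
    crossDiff f p q s t + crossDiff f p q t u = crossDiff f p q s u := by
  unfold crossDiff; ring

theorem crossDiff_eq_sub :
    crossDiff f p q s t = crossDiff f p e s t - crossDiff f q e s t := by
  unfold crossDiff; ring

theorem crossDiff_swap : crossDiff (Function.swap f) p q s t = crossDiff f s t p q := by
  unfold crossDiff Function.swap; ring

theorem corner_swap : corner (Function.swap f) e x y = corner f e y x :=
  crossDiff_swap f e x e y

theorem corner_base_left : corner f e e y = 0 := by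
  unfold corner crossDiff; ring

theorem corner_base_right : corner f e x e = 0 := by
  unfold corner crossDiff; ring

theorem crossDiff_eq_corner : crossDiff f p q s t =
    corner f e p s + corner f e q t - corner f e p t - corner f e q s := by
  unfold corner crossDiff; ring

variable {f} in
theorem crossDiff_le_two (h01 : ∀ x y, f x y = 0 ∨ f x y = 1) : crossDiff f p q s t ≤ 2 := by
  grind [crossDiff]

end CrossDiff

namespace SupermodRank

variable {D : Type*} {f : D → D → ℤ} {pos : D → ℤ} {X : Set D} {p q s t : D}

theorem crossDiff_nonneg (h : SupermodRank pos f X) (hpq : pos p ≤ pos q) (hst : pos s ≤ pos t)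
    (hp : p ∈ X := by grind) (hq : q ∈ X := by grind)
    (hs : s ∈ X := by grind) (ht : t ∈ X := by grind) : 0 ≤ crossDiff f p q s t :=
  h p hp q hq s hs t ht hpq hst

theorem neg (h : SupermodRank pos f X) : SupermodRank (-pos) f X := by
  intro p hp q hq s hs t ht hpq hst
  rw [crossDiff_rev_left, crossDiff_rev_right, neg_neg]
  exact h q hq p hp t ht s hs (neg_le_neg_iff.mp hpq) (neg_le_neg_iff.mp hst)

theorem swap (h : SupermodRank pos f X) : SupermodRank pos (Function.swap f) X := by
  intro p hp q hq s hs t ht hpq hst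
  rw [crossDiff_swap f]
  exact h s hs t ht p hp q hq hst hpq

theorem lt_right_of_le_left (h : SupermodRank pos f X) (hc : 0 < crossDiff f p q s t)
    (hpq : pos p ≤ pos q) (hp : p ∈ X := by grind) (hq : q ∈ X := by grind)
    (hs : s ∈ X := by grind) (ht : t ∈ X := by grind) : pos s < pos t := by
  by_contra! hts
  have := h.crossDiff_nonneg hpq hts
  rw [crossDiff_rev_right] at this
  linarith

theorem lt_left_of_le_right (h : SupermodRank pos f X) (hc : 0 < crossDiff f p q s t)
    (hst : pos s ≤ pos t) (hp : p ∈ X := by grind) (hq : q ∈ X := by grind)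
    (hs : s ∈ X := by grind) (ht : t ∈ X := by grind) : pos p < pos q :=
  h.swap.lt_right_of_le_left (by rwa [crossDiff_swap f]) hst

theorem crossDiff_mono (h : SupermodRank pos f X) {p' q' s' t' : D}
    (hpp : pos p' ≤ pos p) (hpq : pos p ≤ pos q) (hqq : pos q ≤ pos q')
    (hss : pos s' ≤ pos s) (hst : pos s ≤ pos t) (htt : pos t ≤ pos t')
    (hp : p ∈ X) (hq : q ∈ X) (hs : s ∈ X) (ht : t ∈ X)
    (hp' : p' ∈ X) (hq' : q' ∈ X) (hs' : s' ∈ X) (ht' : t' ∈ X) :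
    crossDiff f p q s t ≤ crossDiff f p' q' s' t' := by
  have hst' : pos s' ≤ pos t' := hss.trans (hst.trans htt)
  calc crossDiff f p q s t
      ≤ crossDiff f p q s' s + crossDiff f p q s t + crossDiff f p q t t' := by
        linarith [h.crossDiff_nonneg hpq hss, h.crossDiff_nonneg hpq htt]
    _ = crossDiff f p q s' t' := by rw [crossDiff_add_right, crossDiff_add_right]
    _ ≤ crossDiff f p' p s' t' + crossDiff f p q s' t' + crossDiff f q q' s' t' := by
        linarith [h.crossDiff_nonneg hpp hst', h.crossDiff_nonneg hqq hst']
    _ = crossDiff f p' q' s' t' := by rw [crossDiff_add_left, crossDiff_add_left]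

section Maximal

variable {e g z : D}

theorem crossDiff_eq_zero_of_le_of_maximal (h : SupermodRank pos f X) (hX : X.Finite)
    (hmax : ∀ a ∈ X, ∀ b ∈ X, crossDiff f a b a b ≤ crossDiff f e g e g)
    (he : e ∈ X) (hg : g ∈ X) (heg : pos e ≤ pos g) (hz : z ∈ X) (hze : pos z ≤ pos e)
    (hs : s ∈ X) (ht : t ∈ X) : crossDiff f z e s t = 0 := by
  wlog hst : pos s ≤ pos t generalizing s t
  · rw [crossDiff_rev_right, this ht hs (le_of_not_ge hst), neg_zero]
  obtain ⟨m, hm, hmin⟩ := X.exists_min_image pos hX ⟨e, he⟩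
  obtain ⟨M, hM, hmax'⟩ := X.exists_max_image pos hX ⟨e, he⟩
  have hmM : crossDiff f z e m M + crossDiff f e g m M ≤ crossDiff f m M m M := by
    rw [crossDiff_add_left]
    exact h.crossDiff_mono (hmin z hz) (hze.trans heg) (hmax' g hg) le_rfl (hmin M hM) le_rfl
      hz hg hm hM hm hM hm hM
  have heg' : crossDiff f e g e g ≤ crossDiff f e g m M :=
    h.crossDiff_mono le_rfl heg le_rfl (hmin e he) heg (hmax' g hg) he hg he hg he hg hm hM
  have hle : crossDiff f z e s t ≤ crossDiff f z e m M :=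
    h.crossDiff_mono le_rfl hze le_rfl (hmin s hs) hst (hmax' t ht) hz he hs ht hz he hm hM
  linarith [hmax m hm M hM, h.crossDiff_nonneg hze hst]

theorem crossDiff_eq_zero_of_ge_of_maximal (h : SupermodRank pos f X) (hX : X.Finite)
    (hmax : ∀ a ∈ X, ∀ b ∈ X, crossDiff f a b a b ≤ crossDiff f e g e g)
    (he : e ∈ X) (hg : g ∈ X) (heg : pos e ≤ pos g) (hz : z ∈ X) (hgz : pos g ≤ pos z)
    (hs : s ∈ X) (ht : t ∈ X) : crossDiff f z g s t = 0 := by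
  refine h.neg.crossDiff_eq_zero_of_le_of_maximal hX (fun a ha b hb => ?_) hg he
    (neg_le_neg heg) hz (neg_le_neg hgz) hs ht
  rw [crossDiff_rev_left f e g, crossDiff_rev_right f _ _ e g, neg_neg]
  exact hmax a ha b hb

/-- Elements ranked outside the interval from `e` to `g` have the same second differences as the
nearest endpoint, so moving them onto that endpoint is harmless. -/
theorem clamp (h : SupermodRank pos f X) (hX : X.Finite)
    (hmax : ∀ a ∈ X, ∀ b ∈ X, crossDiff f a b a b ≤ crossDiff f e g e g)
    (he : e ∈ X) (hg : g ∈ X) (heg : pos e ≤ pos g) :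
    SupermodRank (fun z => max (pos e) (min (pos g) (pos z))) f X := by
  have left {f : D → D → ℤ} (h : SupermodRank pos f X)
      (hmax : ∀ a ∈ X, ∀ b ∈ X, crossDiff f a b a b ≤ crossDiff f e g e g) {p q : D}
      (hp : p ∈ X) (hq : q ∈ X)
      (hpq : max (pos e) (min (pos g) (pos p)) ≤ max (pos e) (min (pos g) (pos q))) :
      pos p ≤ pos q ∨ ∀ s ∈ X, ∀ t ∈ X, crossDiff f p q s t = 0 := by
    refine or_iff_not_imp_left.mpr fun hqp s hs t ht => ?_
    have low {z : D} (hz : z ∈ X) (hze : pos z ≤ pos e) : crossDiff f z e s t = 0 :=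
      h.crossDiff_eq_zero_of_le_of_maximal hX hmax he hg heg hz hze hs ht
    have high {z : D} (hz : z ∈ X) (hgz : pos g ≤ pos z) : crossDiff f z g s t = 0 :=
      h.crossDiff_eq_zero_of_ge_of_maximal hX hmax he hg heg hz hgz hs ht
    obtain ⟨hpe, hqe⟩ | ⟨hgp, hgq⟩ | ⟨hgp, hqe, hge⟩ :
        (pos p ≤ pos e ∧ pos q ≤ pos e) ∨ (pos g ≤ pos p ∧ pos g ≤ pos q) ∨
          (pos g ≤ pos p ∧ pos q ≤ pos e ∧ pos g ≤ pos e) := by omega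
    · rw [crossDiff_eq_sub f e, low hp hpe, low hq hqe, sub_zero]
    · rw [crossDiff_eq_sub f g, high hp hgp, high hq hgq, sub_zero]
    · rw [crossDiff_eq_sub f g, high hp hgp, ← crossDiff_add_left f q e g, low hq hqe, high he hge,
        add_zero, sub_zero]
  intro p hp q hq s hs t ht hpq hst
  rcases left h hmax hp hq hpq with hpq | hzero
  · rcases left h.swap (by simpa only [crossDiff_swap f] using hmax) hs ht hst with hst | hzero
    · exact h.crossDiff_nonneg hpq hst
    · rw [← crossDiff_swap f, hzero p hp q hq]
  · rw [hzero s hs t ht]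

end Maximal

end SupermodRank

namespace LocallySupermod

variable {D : Type*} {f : D → D → ℤ} {S T : Set (D → D → ℤ)}

theorem mono (h : LocallySupermod T) (hST : S ⊆ T) : LocallySupermod S := fun a b c d =>
  (h a b c d).imp fun _ hr f hf => hr f (hST hf)

theorem swap (h : LocallySupermod {f}) : LocallySupermod {Function.swap f} := by
  intro a b c d
  obtain ⟨pos, hr⟩ := h a b c d
  exact ⟨pos, by simpa using (hr f rfl).swap⟩

theorem exists_rank_le (h : LocallySupermod S) (a b c d : D) :
    ∃ pos : D → ℤ, pos a ≤ pos b ∧ ∀ f ∈ S, SupermodRank pos f {a, b, c, d} := by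
  obtain ⟨pos, hr⟩ := h a b c d
  rcases le_total (pos a) (pos b) with hab | hba
  · exact ⟨pos, hab, hr⟩
  · exact ⟨-pos, neg_le_neg hba, fun f hf => (hr f hf).neg⟩

theorem crossDiff_nonneg_of_pos (h : LocallySupermod {f}) {x y y' z : D}
    (hz : 0 < crossDiff f z x y y') (hy' : 0 < crossDiff f y' x y y') :
    0 ≤ crossDiff f z x y' x := by
  obtain ⟨pos, hzx, hr⟩ := h.exists_rank_le z x y y'
  have hr := hr f rfl
  have hyy' : pos y < pos y' := hr.lt_right_of_le_left hz hzx
  have hy'x : pos y' < pos x := hr.lt_left_of_le_right hy' hyy'.le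
  exact hr.crossDiff_nonneg hzx hy'x.le

end LocallySupermod

/-- Any four elements containing `e` and `g` admit a ranking for `f` that puts `e` first and `g`
last. -/
def IsOuter {D : Type*} (f : D → D → ℤ) (e g : D) : Prop :=
  ∀ x y, ∃ pos : D → ℤ, Spans pos e g ∧ SupermodRank pos f {e, g, x, y}

theorem LocallySupermod.exists_isOuter {D : Type*} [Nonempty D] {f : D → D → ℤ}
    (h : LocallySupermod {f}) {N : ℤ} (hN : ∀ a b, crossDiff f a b a b ≤ N) :
    ∃ e g, IsOuter f e g := by
  obtain ⟨_, ⟨e, g, rfl⟩, hmax⟩ := Int.exists_greatest_of_bdd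
    (P := fun n => ∃ a b, crossDiff f a b a b = n) ⟨N, by rintro _ ⟨a, b, rfl⟩; exact hN a b⟩
    ⟨_, Classical.arbitrary D, Classical.arbitrary D, rfl⟩
  refine ⟨e, g, fun x y => ?_⟩
  obtain ⟨pos, heg, hr⟩ := h.exists_rank_le e g x y
  refine ⟨fun z => max (pos e) (min (pos g) (pos z)), fun z => by grind, ?_⟩
  exact (hr f rfl).clamp (Set.toFinite _) (fun a _ b _ => hmax _ ⟨a, b, rfl⟩)
    (by simp) (by simp) heg

namespace IsOuter

variable {D : Type*} {f : D → D → ℤ} {e g x x' y y' : D}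

theorem swap (h : IsOuter f e g) : IsOuter (Function.swap f) e g := fun x y =>
  (h x y).imp fun _ hr => ⟨hr.1, hr.2.swap⟩

theorem corner_nonneg (h : IsOuter f e g) (x y : D) : 0 ≤ corner f e x y := by
  obtain ⟨pos, hs, hr⟩ := h x y
  exact hr.crossDiff_nonneg (hs x).1 (hs y).1

theorem corner_le_row (h : IsOuter f e g) (x y : D) : corner f e x y ≤ corner f e x g := by
  obtain ⟨pos, hs, hr⟩ := h x y
  have := hr.crossDiff_nonneg (hs x).1 (hs y).2
  rw [crossDiff_eq_corner f e, corner_base_left, corner_base_left] at this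
  linarith

theorem corner_le_col (h : IsOuter f e g) (x y : D) : corner f e x y ≤ corner f e g y := by
  simpa only [corner_swap f] using h.swap.corner_le_row y x

theorem row_add_col_le (h : IsOuter f e g) (x y : D) :
    corner f e x g + corner f e g y ≤ corner f e g g + corner f e x y := by
  obtain ⟨pos, hs, hr⟩ := h x y
  have := hr.crossDiff_nonneg (hs x).2 (hs y).2
  rw [crossDiff_eq_corner f e] at this
  linarith

theorem corner_self_eq (h : IsOuter f e g) (hxy : corner f e g x = corner f e g y) :
    corner f e x x = corner f e x y := by
  obtain ⟨pos, hs, hr⟩ := h x y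
  have hsum : crossDiff f e x x y + crossDiff f x g x y = 0 := by
    rw [crossDiff_add_left, crossDiff_eq_corner f e]
    simp [corner_base_left, hxy]
  have hcorner : crossDiff f e x x y = corner f e x y - corner f e x x := by
    simp [crossDiff_eq_corner f e, corner_base_left]
  rcases le_total (pos x) (pos y) with hle | hle
  · linarith [hr.crossDiff_nonneg (hs x).1 hle, hr.crossDiff_nonneg (hs x).2 hle]
  · have hlow := hr.crossDiff_nonneg (hs x).1 hle
    have hhigh := hr.crossDiff_nonneg (hs x).2 hle
    rw [crossDiff_rev_right] at hlow hhigh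
    linarith

theorem corner_congr_right (h : IsOuter f e g) (hf : LocallySupermod {f})
    (h2 : corner f e g g ≤ 2) (hy : corner f e g y = corner f e g y') (x : D) :
    corner f e x y = corner f e x y' := by
  wlog hle : corner f e x y ≤ corner f e x y' generalizing y y'
  · exact (this hy.symm (le_of_not_ge hle)).symm
  by_contra hne
  have hy'y : corner f e y' y' = corner f e y' y := h.corner_self_eq hy.symm
  have hlast (z : D) (hz : corner f e z y = corner f e z y') : 0 ≤ crossDiff f z x y' x :=
    hf.crossDiff_nonneg_of_pos (y := y) (by rw [crossDiff_eq_corner f e]; omega)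
      (by rw [crossDiff_eq_corner f e]; omega)
  have hxx : corner f e x y' ≤ corner f e x x := by
    have := hlast e (by rw [corner_base_left, corner_base_left])
    rw [crossDiff_eq_corner f e, corner_base_left, corner_base_left] at this
    linarith
  have hcol : corner f e g x = corner f e g y := by
    have hgx := hlast g hy
    rw [crossDiff_eq_corner f e] at hgx
    have := h.corner_nonneg x y
    have := h.row_add_col_le x y
    have := h.corner_le_row x x
    have := h.corner_le_col x x
    have := h.corner_le_col x y'
    omega
  have := h.corner_self_eq hcol
  omega

theorem corner_congr (h : IsOuter f e g) (hf : LocallySupermod {f}) (h2 : corner f e g g ≤ 2)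
    (hx : corner f e x g = corner f e x' g) (hy : corner f e g y = corner f e g y') :
    corner f e x y = corner f e x' y' := by
  have hleft : corner (Function.swap f) e y' x = corner (Function.swap f) e y' x' :=
    h.swap.corner_congr_right hf.swap (by rwa [corner_swap f])
      (by rwa [corner_swap f, corner_swap f]) y'
  rw [corner_swap f, corner_swap f] at hleft
  exact (h.corner_congr_right hf h2 hy x).trans hleft

end IsOuter

/-- The sum of the row weight and the column weight of `x`. For an outer pair `(e, g)` its weak
order turns out to be the one along which `f` is supermodular. -/
def height {D : Type*} (f : D → D → ℤ) (e g x : D) : ℤ :=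
  corner f e x g + corner f e g x

namespace IsOuter

variable {D : Type*} {f : D → D → ℤ} {e g x y : D}

theorem row_le_col_le_of_height_le (h : IsOuter f e g) (hxy : height f e g x ≤ height f e g y) :
    corner f e x g ≤ corner f e y g ∧ corner f e g x ≤ corner f e g y := by
  have comparable : (corner f e x g ≤ corner f e y g ∧ corner f e g x ≤ corner f e g y) ∨
      (corner f e y g ≤ corner f e x g ∧ corner f e g y ≤ corner f e g x) := by
    obtain ⟨pos, hs, hr⟩ := h x y
    refine (le_total (pos x) (pos y)).imp (fun hle => ?_) (fun hle => ?_)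
    all_goals
      have hrow := hr.crossDiff_nonneg hle (hs g).1
      have hcol := hr.crossDiff_nonneg (hs g).1 hle
      simp only [crossDiff_eq_corner f e, corner_base_left, corner_base_right] at hrow hcol
      constructor <;> linarith
  unfold height at hxy
  omega

theorem supermodRank_height (h : IsOuter f e g) (hf : LocallySupermod {f})
    (h2 : corner f e g g ≤ 2) : SupermodRank (height f e g) f Set.univ := by
  intro x _ x' _ y _ y' _ hx hy
  have hrow := (h.row_le_col_le_of_height_le hx).1
  have hcol := (h.row_le_col_le_of_height_le hy).2
  rw [crossDiff_eq_corner f e]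
  rcases hrow.eq_or_lt with hrow | hrow
  · rw [h.corner_congr hf h2 hrow (rfl : corner f e g y = _),
      h.corner_congr hf h2 hrow (rfl : corner f e g y' = _)]
    linarith
  rcases hcol.eq_or_lt with hcol | hcol
  · rw [h.corner_congr hf h2 (rfl : corner f e x g = _) hcol,
      h.corner_congr hf h2 (rfl : corner f e x' g = _) hcol]
    linarith
  -- Both weights increase strictly within `{0, 1, 2}`, so each of them starts at the least value
  -- or ends at the greatest one, where the bounds on `corner` determine it.
  have bounds (u v : D) := And.intro (h.corner_nonneg u v) <|
    And.intro (h.corner_le_row u v) <| And.intro (h.corner_le_col u v) (h.row_add_col_le u v)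
  have := bounds x' y'
  have := bounds x' y
  have := bounds x y'
  have := bounds x y
  omega

/-- An element of least height behaves like `e` and one of greatest height like `g`. -/
theorem corner_of_spans (h : IsOuter f e g) {a b : D} (hab : Spans (height f e g) a b) (z : D) :
    (corner f e a z = 0 ∧ corner f e z a = 0) ∧
      corner f e b z = corner f e g z ∧ corner f e z b = corner f e z g := by
  have ha := h.row_le_col_le_of_height_le (hab e).1
  have hb := h.row_le_col_le_of_height_le (hab g).2
  simp only [corner_base_left, corner_base_right] at ha
  refine ⟨⟨?_, ?_⟩, ?_, ?_⟩
  · linarith [h.corner_nonneg a z, h.corner_le_row a z]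
  · linarith [h.corner_nonneg z a, h.corner_le_col z a]
  · linarith [h.row_add_col_le b z, h.corner_le_col b z]
  · linarith [h.row_add_col_le z b, h.corner_le_row z b]

theorem spans_height (h : IsOuter f e g) : Spans (height f e g) e g := by
  intro z
  have hez := h.corner_nonneg z g
  have hze := h.corner_nonneg g z
  have hzg := h.corner_le_col z g
  have hgz := h.corner_le_row g z
  simp only [height, corner_base_left, corner_base_right]
  omega

end IsOuter

/-- A height function along which `f` is supermodular and whose differences are second differences
of `f` against a lowest and a highest element; the latter makes it, up to reversal, the only
possible order for `f`. -/
structure IsProfile {D : Type*} (f : D → D → ℤ) (τ : D → ℤ) : Prop where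
  supermodRank : SupermodRank τ f Set.univ
  exists_spans : ∃ a b, Spans τ a b
  sub_eq : ∀ {a b}, Spans τ a b → ∀ x y, τ y - τ x = crossDiff f x y a b + crossDiff f a b x y

theorem IsOuter.isProfile_height {D : Type*} {f : D → D → ℤ} {e g : D} (h : IsOuter f e g)
    (hf : LocallySupermod {f}) (h2 : corner f e g g ≤ 2) : IsProfile f (height f e g) where
  supermodRank := h.supermodRank_height hf h2
  exists_spans := ⟨e, g, h.spans_height⟩
  sub_eq {a b} hab x y := by
    obtain ⟨⟨hax, hxa⟩, hbx, hxb⟩ := h.corner_of_spans hab x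
    obtain ⟨⟨hay, hya⟩, hby, hyb⟩ := h.corner_of_spans hab y
    rw [crossDiff_eq_corner f e, crossDiff_eq_corner f e, hax, hxa, hbx, hxb, hay, hya, hby, hyb]
    unfold height
    ring

theorem LocallySupermod.exists_isProfile {D : Type*} [Nonempty D] {f : D → D → ℤ}
    (hf : LocallySupermod {f}) (h2 : ∀ x y, crossDiff f x y x y ≤ 2) : ∃ τ, IsProfile f τ := by
  obtain ⟨e, g, h⟩ := hf.exists_isOuter h2
  exact ⟨height f e g, h.isProfile_height hf (h2 e g)⟩

/-- Two height functions have a common lowest and a common highest element. -/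
def Aligned {D : Type*} (τ σ : D → ℤ) : Prop :=
  ∃ a b, Spans τ a b ∧ Spans σ a b

/-- Two height functions never order two elements oppositely. -/
def Coherent {D : Type*} (τ σ : D → ℤ) : Prop :=
  ∀ x y, τ x < τ y → σ x ≤ σ y

namespace IsProfile

variable {D : Type*} {f g k : D → D → ℤ} {τ σ υ pos : D → ℤ} {X : Set D} {a b c d x y : D}

theorem neg (h : IsProfile f τ) : IsProfile f (-τ) where
  supermodRank := h.supermodRank.neg
  exists_spans := by
    obtain ⟨a, b, hab⟩ := h.exists_spans
    exact ⟨b, a, hab.neg⟩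
  sub_eq {a b} hab x y := by
    have := h.sub_eq (by simpa using hab.neg) x y
    rw [crossDiff_rev_left f b a, crossDiff_rev_right f x y b a, Pi.neg_apply, Pi.neg_apply]
    linarith

theorem pos_lt_pos (h : IsProfile f τ) (hr : SupermodRank pos f X) (hs : Spans τ a b)
    (hab : pos a ≤ pos b) (hxy : τ x < τ y)
    (ha : a ∈ X := by grind) (hb : b ∈ X := by grind)
    (hx : x ∈ X := by grind) (hy : y ∈ X := by grind) :
    pos x < pos y := by
  obtain hc | hc : 0 < crossDiff f x y a b ∨ 0 < crossDiff f a b x y := by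
    have := h.sub_eq hs x y
    omega
  · exact hr.lt_left_of_le_right hc hab
  · exact hr.lt_right_of_le_left hc hab

theorem aligned_of_pos_le (hf : IsProfile f τ) (hg : IsProfile g σ)
    (hrf : SupermodRank pos f X) (hrg : SupermodRank pos g X)
    (hτ : Spans τ a b) (hσ : Spans σ c d) (hab : pos a ≤ pos b) (hcd : pos c ≤ pos d)
    (ha : a ∈ X := by simp) (hb : b ∈ X := by simp)
    (hc : c ∈ X := by simp) (hd : d ∈ X := by simp) : Aligned τ σ := by
  have hlow : τ c ≤ τ a ∨ σ a ≤ σ c := by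
    by_contra! hcon
    exact (hf.pos_lt_pos hrf hτ hab hcon.1).not_gt (hg.pos_lt_pos hrg hσ hcd hcon.2)
  have hhigh : τ b ≤ τ d ∨ σ d ≤ σ b := by
    by_contra! hcon
    exact (hf.pos_lt_pos hrf hτ hab hcon.1).not_gt (hg.pos_lt_pos hrg hσ hcd hcon.2)
  obtain ⟨l, hl⟩ : ∃ l, ∀ z, τ l ≤ τ z ∧ σ l ≤ σ z := hlow.elim
    (fun hca => ⟨c, fun z => ⟨hca.trans (hτ z).1, (hσ z).1⟩⟩)
    (fun hac => ⟨a, fun z => ⟨(hτ z).1, hac.trans (hσ z).1⟩⟩)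
  obtain ⟨u, hu⟩ : ∃ u, ∀ z, τ z ≤ τ u ∧ σ z ≤ σ u := hhigh.elim
    (fun hbd => ⟨d, fun z => ⟨(hτ z).2.trans hbd, (hσ z).2⟩⟩)
    (fun hdb => ⟨b, fun z => ⟨(hτ z).2, (hσ z).2.trans hdb⟩⟩)
  exact ⟨l, u, fun z => ⟨(hl z).1, (hu z).1⟩, fun z => ⟨(hl z).2, (hu z).2⟩⟩

theorem aligned_or_aligned_neg (hf : IsProfile f τ) (hg : IsProfile g σ)
    (hloc : LocallySupermod {f, g}) : Aligned τ σ ∨ Aligned τ (-σ) := by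
  obtain ⟨a, b, hτ⟩ := hf.exists_spans
  obtain ⟨c, d, hσ⟩ := hg.exists_spans
  obtain ⟨pos, hab, hr⟩ := hloc.exists_rank_le a b c d
  refine (le_total (pos c) (pos d)).imp (fun hcd => ?_) (fun hdc => ?_)
  · exact hf.aligned_of_pos_le hg (hr f (by simp)) (hr g (by simp)) hτ hσ hab hcd
  · exact hf.aligned_of_pos_le hg.neg (hr f (by simp)) (hr g (by simp)) hτ hσ.neg hab hdc

theorem coherent_of_aligned (hf : IsProfile f τ) (hg : IsProfile g σ)
    (hloc : LocallySupermod {f, g}) (h : Aligned τ σ) : Coherent τ σ := by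
  obtain ⟨a, b, hτ, hσ⟩ := h
  intro x y hxy
  by_contra! hyx
  obtain ⟨pos, hab, hr⟩ := hloc.exists_rank_le a b x y
  have hxy' : pos x < pos y := hf.pos_lt_pos (hr f (by simp)) hτ hab hxy
  have hyx' : pos y < pos x := hg.pos_lt_pos (hr g (by simp)) hσ hab hyx
  exact absurd hyx' hxy'.not_gt

/-- The common extremes with `τ` of both heights make up only four elements, and a ranking of these
that runs along `τ` runs along `σ` and `υ` as well. -/
theorem aligned_trans (hf : IsProfile f τ) (hg : IsProfile g σ) (hk : IsProfile k υ)
    (hloc : LocallySupermod {f, g, k}) (hne : ∃ x y, τ x < τ y)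
    (hσ : Aligned τ σ) (hυ : Aligned τ υ) : Aligned σ υ := by
  obtain ⟨a, b, hτab, hσab⟩ := hσ
  obtain ⟨c, d, hτcd, hυcd⟩ := hυ
  obtain ⟨pos, hab, hr⟩ := hloc.exists_rank_le a b c d
  have hτ : τ c < τ d := by
    obtain ⟨x, y, hxy⟩ := hne
    exact (hτcd x).1.trans_lt (hxy.trans_le (hτcd y).2)
  have hcd : pos c < pos d := hf.pos_lt_pos (hr f (by simp)) hτab hab hτ
  exact hg.aligned_of_pos_le hk (hr g (by simp)) (hr k (by simp)) hσab hυcd hab hcd.le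

end IsProfile

section Coherence

variable {D : Type*}

theorem exists_coherent_profiles {F : Set (D → D → ℤ)}
    (hprof : ∀ f ∈ F, ∃ τ, IsProfile f τ)
    (hloc : ∀ f ∈ F, ∀ g ∈ F, ∀ k ∈ F, LocallySupermod {f, g, k}) :
    ∃ τ : (D → D → ℤ) → D → ℤ, (∀ f ∈ F, IsProfile f (τ f)) ∧
      ∀ f ∈ F, ∀ g ∈ F, Coherent (τ f) (τ g) := by
  choose! τ hτ using hprof
  by_cases hconst : ∀ f ∈ F, ∀ x y, τ f y ≤ τ f x
  · exact ⟨τ, hτ, fun f hf _ _ x y hxy => absurd hxy (hconst f hf x y).not_gt⟩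
  push Not at hconst
  obtain ⟨f₀, hf₀, hne⟩ := hconst
  have horient : ∀ f ∈ F, ∃ σ, IsProfile f σ ∧ Aligned (τ f₀) σ := fun f hf =>
    ((hτ f₀ hf₀).aligned_or_aligned_neg (hτ f hf) ((hloc f₀ hf₀ f hf f hf).mono (by simp))).elim
      (fun h => ⟨τ f, hτ f hf, h⟩) (fun h => ⟨-τ f, (hτ f hf).neg, h⟩)
  choose! σ hσ hal using horient
  refine ⟨σ, hσ, fun f hf g hg => ?_⟩
  have hfg : Aligned (σ f) (σ g) := (hτ f₀ hf₀).aligned_trans (hσ f hf) (hσ g hg)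
    (hloc f₀ hf₀ f hf g hg) hne (hal f hf) (hal g hg)
  exact (hσ f hf).coherent_of_aligned (hσ g hg) ((hloc f hf g hg g hg).mono (by simp)) hfg

theorem exists_linearOrder_of_coherent {ι : Type*} (τ : ι → D → ℤ)
    (h : ∀ i j, Coherent (τ i) (τ j)) :
    ∃ r : LinearOrder D, ∀ i x y, r.le x y → τ i x ≤ τ i y := by
  let strict : D → D → Prop := fun x y => ∃ i, τ i x < τ i y
  have hstrict : IsStrictOrder D strict :=
    { irrefl := fun x ⟨_, hi⟩ => hi.false
      trans := fun x y z ⟨i, hi⟩ ⟨j, hj⟩ => ⟨i, hi.trans_le (h j i y z hj)⟩ }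
  let P : PartialOrder D := partialOrderOfSO strict
  refine ⟨(inferInstance : LinearOrder (LinearExtension D)), fun i x y hxy => ?_⟩
  by_contra! hyx
  have hyx' : toLinearExtension y ≤ toLinearExtension x :=
    toLinearExtension.monotone (show y < x from ⟨i, hyx⟩).le
  exact hyx.ne (congrArg (τ i) (le_antisymm (α := LinearExtension D) hyx' hxy))

end Coherence

section Chain

variable {D : Type*}

theorem supermodChain2_iff {r : LinearOrder D} {f : D → D → ℤ} : SupermodChain2 r f ↔
    ∀ x x' y y', r.le x x' → r.le y y' → 0 ≤ crossDiff f x x' y y' := by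
  constructor
  · intro h x x' y y' hx hy
    have := h x y' x' y
    rw [min_eq_left hx, min_eq_right hy, max_eq_right hx, max_eq_left hy] at this
    unfold crossDiff
    linarith
  · intro h x₁ y₁ x₂ y₂
    wlog hx : r.le x₁ x₂ generalizing x₁ y₁ x₂ y₂
    · rw [add_comm, min_comm x₁, min_comm y₁, max_comm x₁, max_comm y₁]
      exact this x₂ y₂ x₁ y₁ (r.le_total x₁ x₂ |>.resolve_left hx)
    rw [min_eq_left hx, max_eq_right hx]
    rcases r.le_total y₁ y₂ with hy | hy
    · rw [min_eq_left hy, max_eq_right hy]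
    · rw [min_eq_right hy, max_eq_left hy]
      have := h _ _ _ _ hx hy
      unfold crossDiff at this
      linarith

theorem exists_supermodRank_of_linearOrder (D' : Finset D) (r : LinearOrder D') :
    ∃ pos : D → ℤ, ∀ f : D → D → ℤ,
      SupermodChain2 r (fun x y : D' => f x.1 y.1) → SupermodRank pos f D' := by
  let rank : D' → ℤ := fun x => ((monoEquivOfFin D' rfl).symm x : ℕ)
  have hrank (x y : D') : rank x ≤ rank y ↔ x ≤ y := by simp [rank]
  refine ⟨Function.extend Subtype.val rank 0, fun f hf p hp q hq s hs t ht hpq hst => ?_⟩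
  lift p to D' using hp
  lift q to D' using hq
  lift s to D' using hs
  lift t to D' using ht
  simp only [Subtype.val_injective.extend_apply, hrank] at hpq hst
  exact supermodChain2_iff.mp hf p q s t hpq hst

theorem LocallySupermod.of_forall_finset {S : Set (D → D → ℤ)}
    (h : ∀ D' : Finset D, D'.card ≤ 4 → ∃ r : LinearOrder D', ∀ f ∈ S,
      SupermodChain2 r (fun x y : D' => f x.1 y.1)) : LocallySupermod S := by
  classical
  intro a b c d
  obtain ⟨r, hr⟩ := h {a, b, c, d} Finset.card_le_four
  obtain ⟨pos, hpos⟩ := exists_supermodRank_of_linearOrder _ r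
  exact ⟨pos, fun f hf => by simpa using hpos f (hr f hf)⟩

theorem exists_supermodChain2_of_locallySupermod {F : Set (D → D → ℤ)}
    (h2 : ∀ f ∈ F, ∀ x y, crossDiff f x y x y ≤ 2)
    (hloc : ∀ f ∈ F, ∀ g ∈ F, ∀ k ∈ F, LocallySupermod {f, g, k}) :
    ∃ r : LinearOrder D, ∀ f ∈ F, SupermodChain2 r f := by
  rcases isEmpty_or_nonempty D with _ | _
  · exact ⟨LinearOrder.lift' (isEmptyElim : D → ℤ) fun x => isEmptyElim x,
      fun _ _ x => isEmptyElim x⟩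
  have hprof : ∀ f ∈ F, ∃ τ, IsProfile f τ := fun f hf =>
    ((hloc f hf f hf f hf).mono (by simp)).exists_isProfile (h2 f hf)
  obtain ⟨τ, hτ, hcoh⟩ := exists_coherent_profiles hprof hloc
  obtain ⟨r, hr⟩ := exists_linearOrder_of_coherent (fun f : F => τ f)
    fun f g => hcoh f f.2 g g.2
  exact ⟨r, fun f hf => supermodChain2_iff.mpr fun x x' y y' hx hy =>
    (hτ f hf).supermodRank.crossDiff_nonneg (hr ⟨f, hf⟩ x x' hx) (hr ⟨f, hf⟩ y y' hy)⟩

end Chain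

theorem not_supermodular_small_witness_general {D : Type*} (F : Set (D → D → ℤ))
    (h2 : ∀ f ∈ F, ∀ x y, crossDiff f x y x y ≤ 2)
    (h : ¬ ∃ r : LinearOrder D, ∀ f ∈ F, SupermodChain2 r f) :
    ∃ F' : Finset (D → D → ℤ), ↑F' ⊆ F ∧ F'.card ≤ 3 ∧
      ∃ D' : Finset D, D'.card ≤ 4 ∧
        ¬ ∃ r : LinearOrder ↥D', ∀ f ∈ F',
            SupermodChain2 r (fun x y : ↥D' => f x.1 y.1) := by
  classical
  by_contra! hsmall
  refine h (exists_supermodChain2_of_locallySupermod h2 fun f hf g hg k hk => ?_)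
  refine .of_forall_finset fun D' hD' => ?_
  simpa using hsmall {f, g, k} (by grind) Finset.card_le_three D' hD'

/-- If a finite set `F` of binary predicates on a finite set `D` is
not supermodular on any chain on `D`, then there are `F' ⊆ F` with `|F'| ≤ 3` and
`D' ⊆ D` with `|D'| ≤ 4` such that the restrictions of the members of `F'` to
`D' × D'` are not supermodular on any chain on `D'`. -/
theorem not_supermodular_small_witness
    {D : Type*} [Fintype D] [DecidableEq D]
    (F : Finset (D → D → ℤ))
    (h01 : ∀ f ∈ F, ∀ x y, f x y = 0 ∨ f x y = 1)
    (h : ¬ ∃ r : LinearOrder D, ∀ f ∈ F, SupermodChain2 r f) :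
    ∃ F' ⊆ F, F'.card ≤ 3 ∧
      ∃ D' : Finset D, D'.card ≤ 4 ∧
        ¬ ∃ r : LinearOrder ↥D', ∀ f ∈ F',
            SupermodChain2 r (fun x y : ↥D' => f x.1 y.1) := by
  simpa only [Finset.coe_subset] using not_supermodular_small_witness_general (↑F)
    (fun f hf x y => crossDiff_le_two x y x y (h01 f hf)) h
end
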